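/- For every integer n ≥ 1, let Y_n denote the set of smooth functions h : [0,1] → S^1 with ‖h‖_{W^{1,1}} ≤ 1 + πn, topologized by the L^1-norm. Then there is no continuous map β : S^{2n} → Y_n with β(−x) = −β(x) for all x ∈ S^{2n} (where −β(x) denotes the pointwise negation of the function β(x)); that is, the ℤ/2-coindex of Y_n is at most 2n − 1. -/

import Mathlib

open MeasureTheory

/-- Membership in `Y_n`: `h` is smooth on `[0,1]`, circle-valued there, and
`‖h‖_{W^{1,1}} ≤ 1 + π n`. -/
def MemYn (n : ℕ) (h : ℝ → ℂ) : Prop :=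
  ContDiffOn ℝ (⊤ : ℕ∞) h (Set.Icc 0 1) ∧
  (∀ x ∈ Set.Icc (0:ℝ) 1, ‖h x‖ = 1) ∧
  (∫ x in (0:ℝ)..1, ‖h x‖) + (∫ x in (0:ℝ)..1, ‖derivWithin h (Set.Icc 0 1) x‖)
    ≤ 1 + Real.pi * n

section BUAlg
open MvPolynomial

theorem odd_alg_aux (k : ℕ) : ∀ (B : Type) [CommRing B] [Algebra ℝ B] [FiniteDimensional ℝ B],
    Module.finrank ℝ B = k → Odd k → Nonempty (B →ₐ[ℝ] ℝ) := by
  induction k using Nat.strong_induction_on with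
  | _ k ih =>
  intro B _ _ _ hk hodd
  have hnt : Nontrivial B := by
    by_contra h
    rw [not_nontrivial_iff_subsingleton] at h
    have : Module.finrank ℝ B = 0 := Module.finrank_zero_of_subsingleton
    rw [← hk, this] at hodd
    exact absurd hodd (by decide)
  by_cases hf : IsField B
  · let _ := hf.toField
    have hA : Algebra.IsAlgebraic ℝ B := Algebra.IsAlgebraic.of_finite ℝ B
    rcases @Real.nonempty_algEquiv_or B hf.toField _ hA with ⟨⟨e⟩⟩ | ⟨⟨e⟩⟩
    · exact ⟨e.toAlgHom⟩
    · have := e.toLinearEquiv.finrank_eq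
      rw [Complex.finrank_real_complex] at this
      have h2 : Module.finrank ℝ B = 2 := this
      rw [← hk, h2] at hodd
      exact absurd hodd (by decide)
  · obtain ⟨b, hb0, hbu⟩ : ∃ b : B, b ≠ 0 ∧ ¬ IsUnit b := by
      by_contra hcon
      push Not at hcon
      refine hf ⟨⟨0, 1, zero_ne_one⟩, mul_comm, fun {a} ha => ?_⟩
      exact (hcon a ha).exists_right_inv
    let f : B →ₗ[B] B := LinearMap.toSpanSingleton B B b
    have hfa : ∀ x, f x = x * b := fun x => by simp [f]
    let I : Ideal B := LinearMap.range f
    let J : Ideal B := LinearMap.ker f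
    have e1 : Module.finrank ℝ (B ⧸ J) = Module.finrank ℝ I :=
      (f.quotKerEquivRange.restrictScalars ℝ).finrank_eq
    have e2 : Module.finrank ℝ (B ⧸ I) + Module.finrank ℝ I = Module.finrank ℝ B :=
      Submodule.finrank_quotient_add_finrank (I.restrictScalars ℝ)
    have e3 : Module.finrank ℝ (B ⧸ J) + Module.finrank ℝ J = Module.finrank ℝ B :=
      Submodule.finrank_quotient_add_finrank (J.restrictScalars ℝ)
    have hI : 0 < Module.finrank ℝ I := by
      have : Nontrivial I := ⟨⟨⟨b, 1, by simp [hfa]⟩, 0, fun h => hb0 (by simpa using congrArg Subtype.val h)⟩⟩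
      exact Module.finrank_pos
    have hJ : 0 < Module.finrank ℝ J := by
      by_contra h0
      have h0 : Module.finrank ℝ J = 0 := by omega
      apply hbu
      have hI' : Module.finrank ℝ I = Module.finrank ℝ B := by omega
      have : I.restrictScalars ℝ = ⊤ := Submodule.eq_top_of_finrank_eq hI'
      have h1 : (1 : B) ∈ I.restrictScalars ℝ := by rw [this]; trivial
      obtain ⟨x, hx⟩ := h1
      rw [hfa] at hx
      exact IsUnit.of_mul_eq_one x (by rw [mul_comm]; exact hx)
    by_cases ho : Odd (Module.finrank ℝ (B ⧸ I))
    · obtain ⟨φ⟩ := ih _ (by omega) (B ⧸ I) rfl ho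
      exact ⟨φ.comp (Ideal.Quotient.mkₐ ℝ I)⟩
    · have ho' : Odd (Module.finrank ℝ (B ⧸ J)) := by
        rw [← hk] at hodd
        grind
      obtain ⟨φ⟩ := ih _ (by omega) (B ⧸ J) rfl ho'
      exact ⟨φ.comp (Ideal.Quotient.mkₐ ℝ J)⟩

set_option linter.unusedSectionVars false
section Tri
variable {σ : Type} [Fintype σ] [DecidableEq σ]

def BLow (k : ℕ) (R : MvPolynomial σ ℝ) : Prop := ∀ m, coeff m R ≠ 0 → m.degree < k

def BLead (e : σ →₀ ℕ) (P : MvPolynomial σ ℝ) : Prop := BLow e.degree (P - monomial e 1)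

theorem BLow.add {k : ℕ} {P Q : MvPolynomial σ ℝ} (hP : BLow k P) (hQ : BLow k Q) :
    BLow k (P + Q) := by
  intro m hm
  rw [coeff_add] at hm
  by_cases h : coeff m P = 0
  · exact hQ m (by simpa [h] using hm)
  · exact hP m h

theorem BLow.mul {k l : ℕ} {P Q : MvPolynomial σ ℝ} (hP : BLow (k + 1) P) (hQ : BLow l Q) :
    BLow (k + l) (P * Q) := by
  intro m hm
  have := support_mul P Q (mem_support_iff.mpr hm)
  obtain ⟨a, ha, b, hb, rfl⟩ := Finset.mem_add.mp this
  have h1 := hP a (mem_support_iff.mp ha)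
  have h2 := hQ b (mem_support_iff.mp hb)
  rw [map_add]
  omega

theorem BLow.mono {k l : ℕ} (h : k ≤ l) {P : MvPolynomial σ ℝ} (hP : BLow k P) : BLow l P :=
  fun m hm => (hP m hm).trans_le h

theorem BLow_monomial (e : σ →₀ ℕ) : BLow (e.degree + 1) (monomial e (1:ℝ)) := by
  intro m hm
  rw [coeff_monomial] at hm
  split_ifs at hm with h
  · subst h; omega
  · exact absurd rfl hm

theorem BLead.mul {e e' : σ →₀ ℕ} {P P' : MvPolynomial σ ℝ} (h : BLead e P) (h' : BLead e' P') :
    BLead (e + e') (P * P') := by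
  have : P * P' - monomial (e + e') 1 = monomial e 1 * (P' - monomial e' 1)
      + monomial e' 1 * (P - monomial e 1) + (P - monomial e 1) * (P' - monomial e' 1) := by
    have : monomial (e + e') (1:ℝ) = monomial e 1 * monomial e' 1 := by
      rw [monomial_mul, one_mul]
    rw [this]; ring
  unfold BLead
  rw [this, map_add]
  refine BLow.add (BLow.add ?_ ?_) ?_
  · exact (BLow_monomial e).mul h'
  · rw [add_comm e.degree]; exact (BLow_monomial e').mul h
  · exact (h.mono (Nat.le_succ _)).mul h'

theorem BLead_one : BLead (0 : σ →₀ ℕ) 1 := by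
  intro m hm
  exact absurd (by simp) hm

theorem BLead.pow {e : σ →₀ ℕ} {P : MvPolynomial σ ℝ} (h : BLead e P) (k : ℕ) :
    BLead (k • e) (P ^ k) := by
  induction k with
  | zero => simpa using BLead_one
  | succ k ih => rw [pow_succ, succ_nsmul]; exact ih.mul h

theorem BLead_prod {ι : Type} (s : Finset ι) (e : ι → (σ →₀ ℕ)) (P : ι → MvPolynomial σ ℝ)
    (h : ∀ i ∈ s, BLead (e i) (P i)) : BLead (∑ i ∈ s, e i) (∏ i ∈ s, P i) := by
  classical
  induction s using Finset.induction_on with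
  | empty => simpa using BLead_one
  | insert a s ha ih =>
    rw [Finset.sum_insert ha, Finset.prod_insert ha]
    exact (h a (by simp)).mul (ih fun i hi => h i (by simp [hi]))

theorem BLead_X (i : σ) : BLead (Finsupp.single i 1) (X i : MvPolynomial σ ℝ) := by
  intro m hm
  exact absurd (by simp [X]) hm

theorem tri_span {M : Type} [AddCommMonoid M] (w : σ → M) (P : (σ →₀ ℕ) → MvPolynomial σ ℝ)
    (hL : ∀ e, BLead e (P e)) (hw : ∀ e, IsWeightedHomogeneous w (P e) (Finsupp.weight w e))
    (k : M) (f : MvPolynomial σ ℝ) (hf : IsWeightedHomogeneous w f k) :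
    f ∈ Submodule.span ℝ (P '' {e | Finsupp.weight w e = k}) := by
  have key : ∀ N : ℕ, ∀ f : MvPolynomial σ ℝ, IsWeightedHomogeneous w f k → BLow N f →
      f ∈ Submodule.span ℝ (P '' {e | Finsupp.weight w e = k}) := by
    intro N
    induction N with
    | zero =>
      intro f _ h
      have : f = 0 := by
        ext m
        by_contra hm
        exact absurd (h m (by simpa using hm)) (by omega)
      rw [this]; exact zero_mem _
    | succ N ih =>
      intro f hf h
      have hg : f - ∑ e ∈ f.support, coeff e f • P e =
          - ∑ e ∈ f.support, coeff e f • (P e - monomial e 1) := by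
        conv_lhs => lhs; rw [f.as_sum]
        rw [← Finset.sum_sub_distrib, ← Finset.sum_neg_distrib]
        refine Finset.sum_congr rfl fun e _ => ?_
        rw [← smul_neg, neg_sub, smul_sub, smul_monomial, smul_eq_mul, mul_one]
      have hmem : ∑ e ∈ f.support, coeff e f • P e ∈
          Submodule.span ℝ (P '' {e | Finsupp.weight w e = k}) := by
        refine Submodule.sum_mem _ fun e he => Submodule.smul_mem _ _ (Submodule.subset_span ⟨e, ?_, rfl⟩)
        exact hf (mem_support_iff.mp he)
      have h1 : ∀ e ∈ f.support, P e ∈ weightedHomogeneousSubmodule ℝ w k := by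
        intro e he
        rw [mem_weightedHomogeneousSubmodule]
        have := hw e
        rwa [hf (mem_support_iff.mp he)] at this
      have := ih (f - ∑ e ∈ f.support, coeff e f • P e) ?_ ?_
      · have := add_mem this hmem
        simpa using this
      · have h0 : f ∈ weightedHomogeneousSubmodule ℝ w k := hf
        exact sub_mem h0 (Submodule.sum_mem _ fun e he => Submodule.smul_mem _ _ (h1 e he))
      · rw [hg]
        intro m hm
        rw [coeff_neg, coeff_sum, neg_ne_zero] at hm
        obtain ⟨e, he, hne⟩ := Finset.exists_ne_zero_of_sum_ne_zero hm
        rw [coeff_smul] at hne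
        have h2 := hL e m (fun h0 => hne (by rw [h0, smul_zero]))
        have h3 := h e (mem_support_iff.mp he)
        omega
  exact key (f.support.sup Finsupp.degree + 1) f hf fun m hm =>
    Nat.lt_succ_of_le (Finset.le_sup (f := Finsupp.degree) (mem_support_iff.mpr hm))

theorem tri_indep (P : (σ →₀ ℕ) → MvPolynomial σ ℝ)
    (hL : ∀ e, BLead e (P e)) : LinearIndependent ℝ P := by
  rw [linearIndependent_iff']
  intro s g hg
  by_contra! hcon
  obtain ⟨i, hi, hgi⟩ := hcon
  obtain ⟨e, he, hmax⟩ := Finset.exists_max_image (s.filter fun e => g e ≠ 0) Finsupp.degree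
    ⟨i, by simp [hi, hgi]⟩
  rw [Finset.mem_filter] at he
  have h0 := congrArg (coeff e) hg
  rw [coeff_sum, coeff_zero, Finset.sum_eq_single e] at h0
  · have : coeff e (P e) = 1 := by
      by_contra hne
      have := hL e e (by rw [coeff_sub, coeff_monomial, if_pos rfl]; exact sub_ne_zero.mpr hne)
      omega
    rw [coeff_smul, this] at h0
    exact he.2 (by simpa using h0)
  · intro e' he' hne
    by_cases hz : g e' = 0
    · rw [hz, zero_smul, coeff_zero]
    · have hd := hmax e' (by simp [he', hz])
      have : coeff e (P e') = 0 := by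
        by_contra hc
        have := hL e' e (by rw [coeff_sub, coeff_monomial, if_neg hne, sub_zero]; exact hc)
        omega
      rw [coeff_smul, this, smul_zero]
  · intro h; exact absurd he.1 h

end Tri

abbrev wPar (m : ℕ) : Fin m → ZMod 2 := fun _ => 1

theorem weight_wPar {m : ℕ} (e : Fin m →₀ ℕ) : Finsupp.weight (wPar m) e = ((∑ i, e i : ℕ) : ZMod 2) := by
  rw [Finsupp.weight_apply, Finsupp.sum_fintype _ _ (by simp)]
  simp

theorem card_red (m D : ℕ) (hD : Odd D) (d : Fin (m + 1) → ℕ) (hd0 : d 0 = 6)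
    (hd : ∀ i : Fin m, d i.succ = D) :
    Finite {e : Fin (m + 1) →₀ ℕ // (∀ i, e i < d i) ∧ Finsupp.weight (wPar (m + 1)) e = 0} ∧
    Odd (Nat.card {e : Fin (m + 1) →₀ ℕ // (∀ i, e i < d i) ∧ Finsupp.weight (wPar (m + 1)) e = 0}) := by
  have hpar : ∀ e : Fin (m + 1) →₀ ℕ, Finsupp.weight (wPar (m + 1)) e = 0 ↔
      (e 0 + ∑ i : Fin m, e i.succ) % 2 = 0 := by
    intro e
    rw [weight_wPar, Fin.sum_univ_succ, ZMod.natCast_eq_zero_iff, Nat.dvd_iff_mod_eq_zero]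
  let F : {e : Fin (m + 1) →₀ ℕ // (∀ i, e i < d i) ∧ Finsupp.weight (wPar (m + 1)) e = 0} →
      Fin 3 × (Fin m → Fin D) := fun e =>
    (⟨e.1 0 / 2, by have := e.2.1 0; omega⟩, fun i => ⟨e.1 i.succ, by have := e.2.1 i.succ; rwa [hd] at this⟩)
  have hF : Function.Bijective F := by
    constructor
    · rintro ⟨e, he, hw⟩ ⟨e', he', hw'⟩ h
      simp only [F, Prod.mk.injEq, Fin.mk.injEq, funext_iff] at h
      obtain ⟨h1, h2⟩ := h
      rw [hpar] at hw hw'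
      rw [Finset.sum_congr rfl fun i _ => h2 i] at hw
      apply Subtype.ext
      ext i
      refine Fin.cases ?_ ?_ i
      · change e 0 = e' 0
        omega
      · exact h2
    · rintro ⟨c, b⟩
      let t := ∑ i, (b i : ℕ)
      let e : Fin (m + 1) →₀ ℕ := Finsupp.equivFunOnFinite.symm
        (Fin.cons (2 * (c : ℕ) + t % 2) (fun i => (b i : ℕ)) : Fin (m + 1) → ℕ)
      have he0 : e 0 = 2 * (c : ℕ) + t % 2 := by simp [e]
      have hes : ∀ i : Fin m, e i.succ = b i := fun i => by simp [e]
      refine ⟨⟨e, ?_, ?_⟩, ?_⟩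
      · intro i
        refine Fin.cases ?_ ?_ i
        · rw [he0, hd0]; have := c.2; omega
        · intro i; rw [hes, hd]; exact (b i).2
      · rw [hpar, he0, Finset.sum_congr rfl fun i _ => hes i]
        change (2 * (c : ℕ) + t % 2 + t) % 2 = 0
        omega
      · simp only [F, Prod.mk.injEq]
        refine ⟨Fin.ext ?_, funext fun i => Fin.ext (hes i)⟩
        change e 0 / 2 = c
        rw [he0]; omega
  refine ⟨Finite.of_injective F hF.1, ?_⟩
  rw [Nat.card_congr (Equiv.ofBijective F hF)]
  simp only [Nat.card_eq_fintype_card, Fintype.card_prod, Fintype.card_fin, Fintype.card_pi, Finset.prod_const,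
    Finset.card_univ]
  exact Odd.mul (by decide) hD.pow

theorem exists_psi (m D : ℕ) (hD : Odd D) (d : Fin (m + 1) → ℕ) (hd0 : d 0 = 6)
    (hd : ∀ i : Fin m, d i.succ = D) (q : Fin (m + 1) → MvPolynomial (Fin (m + 1)) ℝ)
    (hqL : ∀ i, BLead (Finsupp.single i (d i)) (q i))
    (hqw : ∀ i, IsWeightedHomogeneous (wPar (m + 1)) (q i) (d i : ZMod 2)) :
    ∃ ψ : MvPolynomial (Fin (m + 1)) ℝ →ₗ[ℝ] ℝ, ψ 1 = 1 ∧
      (∀ f g, IsWeightedHomogeneous (wPar (m + 1)) f 0 → IsWeightedHomogeneous (wPar (m + 1)) g 0 →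
        ψ (f * g) = ψ f * ψ g) ∧
      (∀ i f, IsWeightedHomogeneous (wPar (m + 1)) (q i * f) 0 → ψ (q i * f) = 0) := by
  have hdpos : ∀ i, 0 < d i := by
    intro i
    refine Fin.cases (by omega) (fun i => ?_) i
    rw [hd]; exact hD.pos
  let P : (Fin (m + 1) →₀ ℕ) → MvPolynomial (Fin (m + 1)) ℝ := fun e =>
    ∏ i, (X i ^ (e i % d i) * q i ^ (e i / d i))
  have hL : ∀ e, BLead e (P e) := by
    intro e
    have := BLead_prod Finset.univ (fun i => (e i % d i) • Finsupp.single i 1 +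
      (e i / d i) • Finsupp.single i (d i)) (fun i => X i ^ (e i % d i) * q i ^ (e i / d i))
      (fun i _ => ((BLead_X i).pow _).mul ((hqL i).pow _))
    convert this using 1
    ext j
    simp [Finsupp.single_apply, Finset.sum_add_distrib, Nat.mod_add_div']
  have hw : ∀ e, IsWeightedHomogeneous (wPar (m + 1)) (P e) (Finsupp.weight (wPar (m + 1)) e) := by
    intro e
    have := IsWeightedHomogeneous.prod Finset.univ (fun i => X i ^ (e i % d i) * q i ^ (e i / d i)) 
      (fun i => (e i % d i) • (1 : ZMod 2) + (e i / d i) • (d i : ZMod 2)) (w := wPar (m + 1))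
      (fun i _ => ((isWeightedHomogeneous_X ℝ (wPar (m + 1)) i).pow _).mul ((hqw i).pow _))
    convert this using 1
    rw [weight_wPar, Nat.cast_sum]
    refine Finset.sum_congr rfl fun i _ => ?_
    conv_lhs => rw [← Nat.mod_add_div' (e i) (d i)]
    simp
  have hshift : ∀ e i, q i * P e = P (e + Finsupp.single i (d i)) := by
    intro e i
    simp only [P]
    rw [← Finset.mul_prod_erase _ _ (Finset.mem_univ i), ← Finset.mul_prod_erase _ _ (Finset.mem_univ i)]
    rw [← mul_assoc]
    congr 1
    · simp only [Finsupp.add_apply, Finsupp.single_eq_same, Nat.add_mod_right, Nat.add_div_right _ (hdpos i)]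
      rw [pow_succ]; ring
    · refine Finset.prod_congr rfl fun j hj => ?_
      have : j ≠ i := (Finset.mem_erase.mp hj).1
      simp [this.symm]
  have hspan : ∀ f, f ∈ Submodule.span ℝ (Set.range P) := by
    intro f
    have := tri_span (fun _ => (0 : ZMod 1)) P hL (fun e => fun _ _ => Subsingleton.elim _ _) 0 f 
      (fun _ _ => Subsingleton.elim _ _)
    exact Submodule.span_mono (Set.image_subset_range _ _) this
  have hind := tri_indep P hL
  let I : Ideal (MvPolynomial (Fin (m + 1)) ℝ) := Ideal.span (Set.range q)
  let T := {e : Fin (m + 1) →₀ ℕ // (∀ i, e i < d i) ∧ Finsupp.weight (wPar (m + 1)) e = 0}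
  obtain ⟨hfin, hcard⟩ := card_red m D hD d hd0 hd
  have hI : ∀ f ∈ I, f ∈ Submodule.span ℝ (P '' {e | ¬ ∀ i, e i < d i}) := by
    intro f hf
    obtain ⟨c, rfl⟩ := Ideal.mem_span_range_iff_exists_fun.mp hf
    refine Submodule.sum_mem _ fun i _ => ?_
    rw [mul_comm]
    generalize c i = ci
    have hc := hspan ci
    induction hc using Submodule.span_induction with
    | mem x hx =>
      obtain ⟨e, rfl⟩ := hx
      rw [hshift]
      refine Submodule.subset_span ⟨_, ?_, rfl⟩
      intro h
      have := h i
      simp at this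
    | zero => rw [mul_zero]; exact zero_mem _
    | add x y _ _ h h' => rw [mul_add]; exact add_mem h h'
    | smul a x _ h => rw [mul_smul_comm]; exact Submodule.smul_mem _ _ h
  have hPI : ∀ e : Fin (m + 1) →₀ ℕ, (¬ ∀ i, e i < d i) → P e ∈ I := by
    intro e he
    push Not at he
    obtain ⟨i, hi⟩ := he
    have : e = (e - Finsupp.single i (d i)) + Finsupp.single i (d i) := by
      rw [tsub_add_cancel_of_le]
      simpa using hi
    rw [this, ← hshift]
    exact Ideal.mul_mem_right _ _ (Ideal.subset_span ⟨i, rfl⟩)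
  let π : MvPolynomial (Fin (m + 1)) ℝ →ₐ[ℝ] (MvPolynomial (Fin (m + 1)) ℝ ⧸ I) := Ideal.Quotient.mkₐ ℝ I
  have hπ : ∀ f, π f = 0 ↔ f ∈ I := fun f => Ideal.Quotient.eq_zero_iff_mem
  let E : Subalgebra ℝ (MvPolynomial (Fin (m + 1)) ℝ) :=
    { carrier := {f | IsWeightedHomogeneous (wPar (m + 1)) f 0}
      mul_mem' := fun {a b} ha hb => by simpa using IsWeightedHomogeneous.mul ha hb
      add_mem' := fun {a b} ha hb => (weightedHomogeneousSubmodule ℝ (wPar (m + 1)) 0).add_mem ha hb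
      algebraMap_mem' := fun r => isWeightedHomogeneous_C _ r }
  let B := E.map π
  let v : T → MvPolynomial (Fin (m + 1)) ℝ ⧸ I := fun e => π (P e.1)
  have hv : LinearIndependent ℝ v := by
    have h1 : LinearIndependent ℝ (fun e : T => P e.1) := hind.comp _ Subtype.val_injective
    refine h1.map (f := π.toLinearMap) ?_
    have h2 := hind.disjoint_span_image (s := {e | ∀ i, e i < d i}) (t := {e | ¬ ∀ i, e i < d i})
      (Set.disjoint_left.mpr fun e h h' => h' h)
    refine h2.mono (Submodule.span_mono ?_) ?_
    · rintro _ ⟨e, rfl⟩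
      exact ⟨e.1, e.2.1, rfl⟩
    · intro f hf
      exact hI f ((hπ f).mp hf)
  have hB : Subalgebra.toSubmodule B = Submodule.span ℝ (Set.range v) := by
    apply le_antisymm
    · rintro _ ⟨f, hf, rfl⟩
      have := tri_span (wPar (m + 1)) P hL hw 0 f hf
      have h3 := Submodule.mem_map_of_mem (f := π.toLinearMap) this
      rw [Submodule.map_span] at h3
      refine Submodule.span_le.mpr ?_ h3
      rintro _ ⟨_, ⟨e, he, rfl⟩, rfl⟩
      by_cases hr : ∀ i, e i < d i
      · exact Submodule.subset_span ⟨⟨e, hr, he⟩, rfl⟩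
      · have : π (P e) = 0 := (hπ _).mpr (hPI e hr)
        change π (P e) ∈ _
        rw [this]; exact zero_mem _
    · rw [Submodule.span_le]
      rintro _ ⟨e, rfl⟩
      refine ⟨P e.1, ?_, rfl⟩
      have := hw e.1
      rw [e.2.2] at this
      exact this
  have : Fintype T := Fintype.ofFinite T
  have hfr : Module.finrank ℝ B = Nat.card T := by
    rw [Nat.card_eq_fintype_card, ← finrank_span_eq_card hv, ← hB]
    rfl
  have hBf : FiniteDimensional ℝ B := by
    have : FiniteDimensional ℝ (Subalgebra.toSubmodule B) := by
      rw [hB]; exact FiniteDimensional.span_of_finite ℝ (Set.finite_range v)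
    exact this
  obtain ⟨φ⟩ := odd_alg_aux _ B hfr hcard
  have hE0 : ∀ f, weightedHomogeneousComponent (wPar (m + 1)) 0 f ∈ E := fun f =>
    weightedHomogeneousComponent_isWeightedHomogeneous 0 f
  let ev : MvPolynomial (Fin (m + 1)) ℝ →ₗ[ℝ] E :=
    (weightedHomogeneousComponent (wPar (m + 1)) 0).codRestrict (Subalgebra.toSubmodule E) hE0
  let ρ : E →ₐ[ℝ] B := (π.comp E.val).codRestrict B fun f => ⟨f.1, f.2, rfl⟩
  have hev : ∀ f (hf : IsWeightedHomogeneous (wPar (m + 1)) f 0), ev f = ⟨f, hf⟩ := by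
    intro f hf
    exact Subtype.ext hf.weightedHomogeneousComponent_same
  refine ⟨(φ.comp ρ).toLinearMap.comp ev, ?_, ?_, ?_⟩
  · have : ev 1 = 1 := hev 1 (isWeightedHomogeneous_one _ _)
    simp [this]
  · intro f g hf hg
    have hfg : IsWeightedHomogeneous (wPar (m + 1)) (f * g) 0 := by simpa using hf.mul hg
    have : ev (f * g) = ev f * ev g := by
      rw [hev f hf, hev g hg, hev _ hfg]; rfl
    simp [this]
  · intro i f hf
    have h0 : ρ (ev (q i * f)) = 0 := by
      rw [hev _ hf]
      apply Subtype.ext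
      exact (hπ _).mpr (Ideal.mul_mem_right _ _ (Ideal.subset_span ⟨i, rfl⟩))
    change φ (ρ (ev (q i * f))) = 0
    rw [h0, map_zero]

theorem psi_point (m : ℕ) (ψ : MvPolynomial (Fin (m + 1)) ℝ →ₗ[ℝ] ℝ) (h1 : ψ 1 = 1)
    (hmul : ∀ f g, IsWeightedHomogeneous (wPar (m + 1)) f 0 → IsWeightedHomogeneous (wPar (m + 1)) g 0 →
        ψ (f * g) = ψ f * ψ g) (i₀ : Fin (m + 1)) (hi : 0 < ψ (X i₀ * X i₀)) :
    ∃ a : Fin (m + 1) → ℝ, ∃ r : ℝ, r ≠ 0 ∧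
      (∀ f, IsWeightedHomogeneous (wPar (m + 1)) f 0 → ψ f = eval a f) ∧
      (∀ f, IsWeightedHomogeneous (wPar (m + 1)) f 1 → ψ (X i₀ * f) = r * eval a f) := by
  set r := Real.sqrt (ψ (X i₀ * X i₀)) with hr
  have hr0 : r ≠ 0 := (Real.sqrt_pos.mpr hi).ne'
  have hrr : ψ (X i₀ * X i₀) = r * r := (Real.mul_self_sqrt hi.le).symm
  let a : Fin (m + 1) → ℝ := fun j => ψ (X i₀ * X j) / r
  have ha : ∀ j, ψ (X i₀ * X j) = r * a j := fun j => by simp only [a]; field_simp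
  have hX : ∀ j, IsWeightedHomogeneous (wPar (m + 1)) (X j : MvPolynomial (Fin (m + 1)) ℝ) 1 :=
    fun j => isWeightedHomogeneous_X ℝ (wPar (m + 1)) j
  have h2 : (1 : ZMod 2) + 1 = 0 := by decide
  have key : ∀ e : Fin (m + 1) →₀ ℕ,
      (Finsupp.weight (wPar (m + 1)) e = 0 → ψ (monomial e 1) = eval a (monomial e 1)) ∧
      (Finsupp.weight (wPar (m + 1)) e = 1 → ψ (X i₀ * monomial e 1) = r * eval a (monomial e 1)) := by
    intro e
    induction hN : e.degree generalizing e with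
    | zero =>
      rw [Finsupp.degree_eq_zero_iff] at hN
      subst hN
      refine ⟨fun _ => ?_, fun h => absurd h (by simp)⟩
      change ψ 1 = eval a 1
      rw [h1, map_one]
    | succ N ih =>
      obtain ⟨j, hj⟩ : ∃ j, e j ≠ 0 := by
        by_contra! hcon
        have : e = 0 := Finsupp.ext hcon
        rw [this, map_zero] at hN
        omega
      obtain ⟨e', rfl⟩ : ∃ e', e = e' + Finsupp.single j 1 := by
        refine ⟨e - Finsupp.single j 1, ?_⟩
        rw [tsub_add_cancel_of_le]
        simpa using Nat.one_le_iff_ne_zero.mpr hj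
      have hd : e'.degree = N := by
        rw [map_add, Finsupp.degree_single] at hN
        omega
      obtain ⟨ih0, ih1⟩ := ih e' hd
      have hm : monomial (e' + Finsupp.single j 1) (1 : ℝ) = monomial e' 1 * X j := by
        rw [X, monomial_mul, one_mul]
      have hwt : Finsupp.weight (wPar (m + 1)) (e' + Finsupp.single j 1) =
          Finsupp.weight (wPar (m + 1)) e' + 1 := by
        rw [map_add, Finsupp.weight_single]; simp
      have hmon : IsWeightedHomogeneous (wPar (m + 1)) (monomial e' (1 : ℝ))
        (Finsupp.weight (wPar (m + 1)) e') := isWeightedHomogeneous_monomial _ _ _ rfl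
      rw [hm, hwt, map_mul (eval a), eval_X]
      constructor
      · intro h
        have he1 : Finsupp.weight (wPar (m + 1)) e' = 1 := by
          generalize Finsupp.weight (wPar (m + 1)) e' = z at h
          revert h; revert z; decide
        rw [he1] at hmon
        have hz : ∀ {f g : MvPolynomial (Fin (m + 1)) ℝ}, IsWeightedHomogeneous (wPar (m + 1)) f 1 →
            IsWeightedHomogeneous (wPar (m + 1)) g 1 → IsWeightedHomogeneous (wPar (m + 1)) (f * g) 0 :=
          fun hf hg => by simpa only [h2] using hf.mul hg
        have e1 := hmul _ _ (hz (hX i₀) (hX i₀)) (hz hmon (hX j))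
        have e2 := hmul _ _ (hz (hX i₀) hmon) (hz (hX i₀) (hX j))
        have e3 : (X i₀ * X i₀ * (monomial e' 1 * X j) : MvPolynomial (Fin (m + 1)) ℝ) =
          X i₀ * monomial e' 1 * (X i₀ * X j) := by ring
        rw [e3, e2, hrr, ih1 he1, ha] at e1
        have : r * r ≠ 0 := mul_ne_zero hr0 hr0
        apply mul_left_cancel₀ this
        rw [← e1]; ring
      · intro h
        have he1 : Finsupp.weight (wPar (m + 1)) e' = 0 := by
          generalize Finsupp.weight (wPar (m + 1)) e' = z at h
          revert h; revert z; decide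
        rw [he1] at hmon
        have e1 := hmul _ (X i₀ * X j) hmon (by simpa only [h2] using (hX i₀).mul (hX j))
        rw [mul_left_comm, e1, ih0 he1, ha]
        ring
  refine ⟨a, r, hr0, fun f hf => ?_, fun f hf => ?_⟩
  · rw [f.as_sum, map_sum, map_sum]
    refine Finset.sum_congr rfl fun e he => ?_
    have := (key e).1 (hf (mem_support_iff.mp he))
    rw [← mul_one (coeff e f), ← smul_eq_mul, ← smul_monomial, map_smul, smul_eval, this, smul_eq_mul]
  · rw [f.as_sum, Finset.mul_sum, map_sum, map_sum, Finset.mul_sum]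
    refine Finset.sum_congr rfl fun e he => ?_
    have := (key e).2 (hf (mem_support_iff.mp he))
    have hm : monomial e (coeff e f) = coeff e f • monomial e (1 : ℝ) := by
      rw [smul_monomial, smul_eq_mul, mul_one]
    rw [hm, mul_smul_comm, map_smul, smul_eval, this, smul_eq_mul]
    ring

theorem alg_zero (m D : ℕ) (hD : Odd D) (p : Fin m → MvPolynomial (Fin (m + 1)) ℝ)
    (hp : ∀ i, IsWeightedHomogeneous (wPar (m + 1)) (p i) 1) (hpd : ∀ i, (p i).totalDegree < D) :
    ∃ a : Fin (m + 1) → ℝ, a 0 ^ 6 + ∑ i : Fin m, a i.succ ^ 2 = 1 ∧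
      ∀ i, a i.succ ^ D + eval a (p i) = 0 := by
  let d : Fin (m + 1) → ℕ := Fin.cons 6 fun _ => D
  let q0 : MvPolynomial (Fin (m + 1)) ℝ := X 0 ^ 6 + (∑ i : Fin m, X i.succ ^ 2 - 1)
  let q : Fin (m + 1) → MvPolynomial (Fin (m + 1)) ℝ := Fin.cons q0
    fun i => X i.succ ^ D + p i
  have hX : ∀ j, IsWeightedHomogeneous (wPar (m + 1)) (X j : MvPolynomial (Fin (m + 1)) ℝ) 1 :=
    fun j => isWeightedHomogeneous_X ℝ (wPar (m + 1)) j
  have hD1 : (D : ZMod 2) = 1 := ZMod.natCast_eq_one_iff_odd.mpr hD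
  have hdeg : ∀ k (f : MvPolynomial (Fin (m + 1)) ℝ), f.totalDegree < k → BLow k f := by
    intro k f hf e he
    have := le_totalDegree (mem_support_iff.mpr he)
    exact lt_of_le_of_lt this hf
  have hq0d : (∑ i : Fin m, X i.succ ^ 2 - 1 : MvPolynomial (Fin (m + 1)) ℝ).totalDegree < 6 := by
    refine lt_of_le_of_lt (totalDegree_sub _ _) ?_
    rw [totalDegree_one, max_lt_iff]
    refine ⟨lt_of_le_of_lt (totalDegree_finsetSum _ _) ?_, by norm_num⟩
    rw [Finset.sup_lt_iff (by norm_num)]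
    intro i _
    rw [totalDegree_X_pow]; norm_num
  have hq0w : IsWeightedHomogeneous (wPar (m + 1)) q0 0 := by
    have hs : ∀ k (i : Fin (m + 1)), Even k → 
        (X i ^ k : MvPolynomial (Fin (m + 1)) ℝ) ∈ weightedHomogeneousSubmodule ℝ (wPar (m + 1)) 0 := by
      intro k i hk
      have := (hX i).pow k
      rw [nsmul_one, (ZMod.natCast_eq_zero_iff_even).mpr hk] at this
      exact this
    have h1 : (1 : MvPolynomial (Fin (m + 1)) ℝ) ∈ weightedHomogeneousSubmodule ℝ (wPar (m + 1)) 0 :=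
      isWeightedHomogeneous_one _ _
    exact add_mem (hs 6 0 (by decide)) (sub_mem (sum_mem fun i _ => hs 2 _ (by decide)) h1)
  have hqsw : ∀ i : Fin m, IsWeightedHomogeneous (wPar (m + 1)) (X i.succ ^ D + p i) 1 := by
    intro i
    have := (hX i.succ).pow D
    rw [nsmul_one, hD1] at this
    exact (weightedHomogeneousSubmodule ℝ (wPar (m + 1)) 1).add_mem this (hp i)
  obtain ⟨ψ, hψ1, hψm, hψ0⟩ := exists_psi m D hD d rfl (fun _ => rfl) q
    (by
      intro i
      refine Fin.cases ?_ (fun i => ?_) i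
      · change BLead (Finsupp.single 0 6) q0
        unfold BLead
        have : q0 - monomial (Finsupp.single 0 6) 1 = ∑ i : Fin m, X i.succ ^ 2 - 1 := by
          simp only [q0, X_pow_eq_monomial]; ring
        rw [this, Finsupp.degree_single]
        exact hdeg _ _ hq0d
      · change BLead (Finsupp.single i.succ D) (X i.succ ^ D + p i)
        unfold BLead
        rw [X_pow_eq_monomial, add_sub_cancel_left, Finsupp.degree_single]
        exact hdeg _ _ (hpd i))
    (by
      intro i
      refine Fin.cases ?_ (fun i => ?_) i
      · change IsWeightedHomogeneous (wPar (m + 1)) q0 ((6 : ℕ) : ZMod 2)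
        exact hq0w
      · change IsWeightedHomogeneous (wPar (m + 1)) (X i.succ ^ D + p i) (D : ZMod 2)
        rw [hD1]; exact hqsw i)
  have hXX : ∀ i j, IsWeightedHomogeneous (wPar (m + 1)) (X i * X j : MvPolynomial (Fin (m + 1)) ℝ) 0 :=
    fun i j => (hX i).mul (hX j)
  obtain ⟨i₀, hi₀⟩ : ∃ i, 0 < ψ (X i * X i) := by
    by_contra! hcon
    have h0 : ψ q0 = 0 := by
      have := hψ0 0 1 (by rw [mul_one]; exact hq0w)
      rwa [mul_one] at this
    have h6 : ψ (X 0 ^ 6) = ψ (X 0 * X 0) ^ 3 := by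
      have : (X 0 ^ 6 : MvPolynomial (Fin (m + 1)) ℝ) = (X 0 * X 0) * ((X 0 * X 0) * (X 0 * X 0)) := by ring
      rw [this, hψm _ _ (hXX 0 0) (by simpa using (hXX 0 0).mul (hXX 0 0)), hψm _ _ (hXX 0 0) (hXX 0 0)]
      ring
    have hs : ∑ i : Fin m, ψ (X i.succ ^ 2) ≤ 0 := Finset.sum_nonpos fun i _ => by
      rw [sq]; exact hcon _
    have h3 : ψ (X 0 * X 0) ^ 3 ≤ 0 := Odd.pow_nonpos (by decide) (hcon 0)
    simp only [q0, map_add, map_sub, map_sum, hψ1, h6] at h0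
    linarith
  obtain ⟨a, r, hr, ha0, ha1⟩ := psi_point m ψ hψ1 hψm i₀ hi₀
  refine ⟨a, ?_, ?_⟩
  · have h0 : ψ q0 = 0 := by
      have := hψ0 0 1 (by rw [mul_one]; exact hq0w)
      rwa [mul_one] at this
    rw [ha0 _ hq0w] at h0
    simp only [q0, map_add, map_sub, map_sum, map_pow, eval_X, map_one] at h0
    linarith
  · intro i
    have h0 : ψ ((X i.succ ^ D + p i) * X i₀) = 0 := hψ0 i.succ (X i₀) ((hqsw i).mul (hX i₀))
    rw [mul_comm, ha1 _ (hqsw i)] at h0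
    have := (mul_eq_zero.mp h0).resolve_left hr
    simpa using this

theorem eval_odd_comp (m : ℕ) (p : MvPolynomial (Fin m) ℝ) (x : Fin m → ℝ) :
    eval x (weightedHomogeneousComponent (wPar m) 1 p) = (eval x p - eval (-x) p) / 2 := by
  induction p using MvPolynomial.induction_on' with
  | monomial e r =>
    have h1 : eval (-x) (monomial e r) = (-1) ^ (∑ i, e i) * eval x (monomial e r) := by
      rw [eval_monomial, eval_monomial, Finsupp.prod_fintype _ _ (by simp), Finsupp.prod_fintype _ _ (by simp),
        ← Finset.prod_pow_eq_pow_sum, mul_left_comm, ← Finset.prod_mul_distrib]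
      congr 1
      refine Finset.prod_congr rfl fun i _ => ?_
      rw [← mul_pow, neg_one_mul, Pi.neg_apply]
    rw [h1]
    rcases Nat.even_or_odd (∑ i, e i) with h | h
    · have : weightedHomogeneousComponent (wPar m) 1 (monomial e r) = 0 := by
        ext e'
        rw [coeff_weightedHomogeneousComponent, coeff_monomial, coeff_zero]
        split_ifs with h1 h2
        · subst h2
          rw [weight_wPar, ZMod.natCast_eq_one_iff_odd] at h1
          exact absurd h (Nat.not_even_iff_odd.mpr h1)
        · rfl
        · rfl
      rw [this, h.neg_one_pow]; simp
    · have : IsWeightedHomogeneous (wPar m) (monomial e r) 1 := 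
        isWeightedHomogeneous_monomial _ _ _ (by rw [weight_wPar, ZMod.natCast_eq_one_iff_odd]; exact h)
      rw [this.weightedHomogeneousComponent_same, h.neg_one_pow]; ring
  | add p q hp hq => rw [map_add, map_add, map_add, map_add, hp, hq]; ring

theorem sw_odd (m : ℕ) (K : Set (Fin m → ℝ)) (hK : IsCompact K) (hKs : ∀ x ∈ K, -x ∈ K)
    (g : (Fin m → ℝ) → ℝ) (hg : ContinuousOn g K) (hodd : ∀ x ∈ K, g (-x) = - g x) (ε : ℝ) (hε : 0 < ε) :
    ∃ p : MvPolynomial (Fin m) ℝ, IsWeightedHomogeneous (wPar m) p 1 ∧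
      ∀ x ∈ K, |eval x p - g x| < ε := by
  have : CompactSpace K := isCompact_iff_compactSpace.mp hK
  let Φ : MvPolynomial (Fin m) ℝ →ₐ[ℝ] C(K, ℝ) :=
    aeval fun i => (⟨fun x => x.1 i, (continuous_apply i).comp continuous_subtype_val⟩ : C(K, ℝ))
  have hΦ : ∀ p (x : K), Φ p x = eval x.1 p := by
    intro p x
    induction p using MvPolynomial.induction_on with
    | C r => simp [Φ]
    | add p q hp hq => simp [hp, hq]
    | mul_X p i hp => simp [hp]; left; simp [Φ]
  have hsep : (Φ.range).SeparatesPoints := by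
    intro x y hxy
    obtain ⟨i, hi⟩ : ∃ i, x.1 i ≠ y.1 i := by
      by_contra! h
      exact hxy (Subtype.ext (funext h))
    refine ⟨_, ⟨Φ (X i), ⟨X i, rfl⟩, rfl⟩, ?_⟩
    simpa [hΦ] using hi
  obtain ⟨⟨_, ⟨p, rfl⟩⟩, hp⟩ := ContinuousMap.exists_mem_subalgebra_near_continuousMap_of_separatesPoints
    Φ.range hsep ⟨fun x : K => g x, hg.domRestrict⟩ ε hε
  have hp' : ∀ x ∈ K, |eval x p - g x| < ε := by
    intro x hx
    have := (ContinuousMap.norm_coe_le_norm _ ⟨x, hx⟩).trans_lt hp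
    rw [← hΦ p ⟨x, hx⟩]
    exact this
  have hneg : ∀ x, eval x (weightedHomogeneousComponent (wPar m) 1 p) = (eval x p - eval (-x) p) / 2 := by
    exact fun x => eval_odd_comp m p x
  refine ⟨weightedHomogeneousComponent (wPar m) 1 p, weightedHomogeneousComponent_isWeightedHomogeneous _ _, ?_⟩
  intro x hx
  rw [hneg]
  have h1 := hp' x hx
  have h2 := hp' _ (hKs x hx)
  rw [hodd x hx] at h2
  rw [abs_lt] at *
  constructor <;> linarith [h1.1, h1.2, h2.1, h2.2]

theorem borsuk_ulam (m : ℕ) (f : EuclideanSpace ℝ (Fin (m + 1)) → Fin m → ℝ)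
    (hf : ContinuousOn f (Metric.sphere 0 1)) (hodd : ∀ x ∈ Metric.sphere (0 : EuclideanSpace ℝ (Fin (m + 1))) 1, f (-x) = - f x) :
    ∃ x ∈ Metric.sphere (0 : EuclideanSpace ℝ (Fin (m + 1))) 1, f x = 0 := by
  by_contra! hcon
  let K : Set (Fin (m + 1) → ℝ) := {a | a 0 ^ 6 + ∑ i : Fin m, a i.succ ^ 2 = 1}
  have hK1 : ∀ a ∈ K, ∀ i, |a i| ≤ 1 := by
    intro a ha i
    have h6 : 0 ≤ a 0 ^ 6 := by positivity
    have hs : 0 ≤ ∑ i : Fin m, a i.succ ^ 2 := Finset.sum_nonneg fun i _ => sq_nonneg _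
    have ha : a 0 ^ 6 + ∑ i : Fin m, a i.succ ^ 2 = 1 := ha
    refine Fin.cases ?_ (fun i => ?_) i
    · have : |a 0| ^ 6 ≤ 1 := by
        rw [Even.pow_abs (by decide)]; linarith
      exact (pow_le_one_iff_of_nonneg (abs_nonneg _) (by norm_num)).mp this
    · have := Finset.single_le_sum (f := fun i : Fin m => a i.succ ^ 2) (fun i _ => sq_nonneg _) (Finset.mem_univ i)
      exact (sq_le_one_iff_abs_le_one _).mp (by linarith)
  have hKc : IsCompact K := by
    refine Metric.isCompact_of_isClosed_isBounded ?_ ?_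
    · exact isClosed_eq (by fun_prop) continuous_const
    · refine (Metric.isBounded_closedBall (x := (0 : Fin (m + 1) → ℝ)) (r := 1)).subset ?_
      intro a ha
      rw [mem_closedBall_zero_iff, pi_norm_le_iff_of_nonneg zero_le_one]
      exact hK1 a ha
  have hK0 : ∀ a ∈ K, (WithLp.toLp 2 a : EuclideanSpace ℝ (Fin (m + 1))) ≠ 0 := by
    intro a ha h
    have : a = 0 := by simpa using h
    subst this
    simp [K] at ha
  have hKs : ∀ a ∈ K, -a ∈ K := by
    intro a ha
    have ha : a 0 ^ 6 + ∑ i : Fin m, a i.succ ^ 2 = 1 := ha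
    change (-a 0) ^ 6 + ∑ i : Fin m, (-a i.succ) ^ 2 = 1
    simpa [Even.neg_pow (show Even 6 by decide)] using ha
  let N : (Fin (m + 1) → ℝ) → EuclideanSpace ℝ (Fin (m + 1)) := fun a =>
    (‖(WithLp.toLp 2 a : EuclideanSpace ℝ (Fin (m + 1)))‖⁻¹ : ℝ) • (WithLp.toLp 2 a : EuclideanSpace ℝ (Fin (m + 1)))
  have hNs : ∀ a ∈ K, N a ∈ Metric.sphere (0 : EuclideanSpace ℝ (Fin (m + 1))) 1 := by
    intro a ha
    rw [mem_sphere_zero_iff_norm, norm_smul, norm_inv, norm_norm]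
    exact inv_mul_cancel₀ (norm_ne_zero_iff.mpr (hK0 a ha))
  have hNc : ContinuousOn N K := by
    refine ContinuousOn.smul (ContinuousOn.inv₀ ?_ fun a ha => norm_ne_zero_iff.mpr (hK0 a ha)) ?_
    · exact ((PiLp.continuous_toLp 2 _).norm).continuousOn
    · exact (PiLp.continuous_toLp 2 _).continuousOn
  let g : (Fin (m + 1) → ℝ) → Fin m → ℝ := fun a => f (N a)
  have hgc : ContinuousOn g K := hf.comp hNc hNs
  have hgo : ∀ a ∈ K, g (-a) = - g a := by
    intro a ha
    have : N (-a) = - N a := by simp [N]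
    simp only [g]
    rw [this, hodd _ (hNs a ha)]
  have hg0 : ∀ a ∈ K, g a ≠ 0 := fun a ha => hcon _ (hNs a ha)
  have hne : K.Nonempty := ⟨Pi.single 0 1, by simp [K]⟩
  obtain ⟨a₀, ha₀, hmin⟩ := hKc.exists_isMinOn hne hgc.norm
  set δ := ‖g a₀‖ with hδ
  have hδ0 : 0 < δ := norm_pos_iff.mpr (hg0 a₀ ha₀)
  have happ : ∀ i : Fin m, ∃ p : MvPolynomial (Fin (m + 1)) ℝ, IsWeightedHomogeneous (wPar (m + 1)) p 1 ∧
      ∀ x ∈ K, |eval x p - g x i| < δ / 4 := fun i =>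
    sw_odd (m + 1) K hKc hKs (fun a => g a i) ((continuous_apply i).comp_continuousOn hgc)
      (fun a ha => by rw [hgo a ha]; rfl) (δ / 4) (by positivity)
  choose p hp1 hp2 using happ
  let D := 2 * (∑ i, (p i).totalDegree) + 1
  obtain ⟨a, haK, ha⟩ := alg_zero m D ⟨_, rfl⟩ (fun i => C (4 / δ) * p i)
    (fun i => by simpa using (isWeightedHomogeneous_C (wPar (m + 1)) (4 / δ)).mul (hp1 i))
    (fun i => by
      refine lt_of_le_of_lt (totalDegree_mul _ _) ?_
      rw [totalDegree_C]
      have := Finset.single_le_sum (f := fun i : Fin m => (p i).totalDegree) (fun i _ => Nat.zero_le _) (Finset.mem_univ i)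
      omega)
  have hle : ‖g a‖ ≤ δ / 2 := by
    rw [pi_norm_le_iff_of_nonneg (by positivity)]
    intro i
    have h1 := hp2 i a haK
    have h2 := ha i
    have h3 : |a i.succ ^ D| ≤ 1 := by rw [abs_pow]; exact pow_le_one₀ (abs_nonneg _) (hK1 a haK _)
    rw [map_mul, eval_C] at h2
    have h4 : eval a (p i) = - (δ / 4) * a i.succ ^ D := by
      have : a i.succ ^ D = - (4 / δ * eval a (p i)) := by linarith
      rw [this]; field_simp
    have h5 : |eval a (p i)| ≤ δ / 4 := by
      rw [h4, abs_mul, abs_neg, abs_of_pos (by positivity : 0 < δ / 4)]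
      nlinarith
    rw [Real.norm_eq_abs]
    rw [abs_lt] at h1
    rw [abs_le] at h5 ⊢
    constructor <;> linarith [h1.1, h1.2, h5.1, h5.2]
  have := hmin haK
  simp only [Set.mem_ofPred_eq] at this
  linarith

end BUAlg

/-- a circle-valued function with vanishing integral on `[a,b]` has variation more than `π`. -/
theorem arc_lemma (h h' : ℝ → ℂ) (a b : ℝ) (hab : a < b)
    (hd : ∀ x ∈ Set.Icc a b, HasDerivWithinAt h (h' x) (Set.Icc a b) x)
    (hc : ContinuousOn h' (Set.Icc a b)) (h1 : ∀ x ∈ Set.Icc a b, ‖h x‖ = 1)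
    (h0 : ∫ x in a..b, h x = 0) : Real.pi < ∫ x in a..b, ‖h' x‖ := by
  by_contra! hle
  have hhc : ContinuousOn h (Set.Icc a b) := fun x hx => (hd x hx).continuousWithinAt
  have hh0 : ∀ x ∈ Set.Icc a b, h x ≠ 0 := fun x hx h => by have := h1 x hx; simp [h] at this
  -- the angular velocity
  let u : ℝ → ℝ := fun x => (h' x * (starRingEnd ℂ) (h x)).im
  have huc : ContinuousOn u (Set.Icc a b) :=
    Complex.continuous_im.comp_continuousOn (hc.mul (Complex.continuous_conj.comp_continuousOn hhc))
  have hre : ∀ x ∈ Set.Icc a b, (h' x * (starRingEnd ℂ) (h x)).re = 0 := by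
    intro x hx
    have e1 : HasDerivWithinAt (fun y => (Complex.normSq (h y))) (2 * (h' x * (starRingEnd ℂ) (h x)).re) (Set.Icc a b) x := by
      have hr : HasDerivWithinAt (fun y => (h y).re) (h' x).re (Set.Icc a b) x :=
        Complex.reCLM.hasFDerivAt.comp_hasDerivWithinAt x (hd x hx)
      have hi : HasDerivWithinAt (fun y => (h y).im) (h' x).im (Set.Icc a b) x :=
        Complex.imCLM.hasFDerivAt.comp_hasDerivWithinAt x (hd x hx)
      have := (hr.mul hr).add (hi.mul hi)
      refine this.congr_deriv ?_
      simp; ring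
    have e2 : HasDerivWithinAt (fun y => (Complex.normSq (h y))) 0 (Set.Icc a b) x := by
      refine (hasDerivWithinAt_const x (Set.Icc a b) (1 : ℝ)).congr (fun y hy => ?_) ?_
      · rw [Complex.normSq_eq_norm_sq, h1 y hy]; norm_num
      · rw [Complex.normSq_eq_norm_sq, h1 x hx]; norm_num
    have := (uniqueDiffOn_Icc hab x hx).eq_deriv _ e1 e2
    linarith
  have hu : ∀ x ∈ Set.Icc a b, h' x = Complex.I * u x * h x := by
    intro x hx
    have e1 : h' x * (starRingEnd ℂ) (h x) = Complex.I * u x := by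
      apply Complex.ext <;> simp [hre x hx, u] 
    rw [← e1, mul_assoc, mul_comm _ (h x), Complex.mul_conj, Complex.normSq_eq_norm_sq, h1 x hx]
    simp
  have hun : ∀ x ∈ Set.Icc a b, |u x| = ‖h' x‖ := by
    intro x hx
    rw [hu x hx]; simp [h1 x hx]
  let θ : ℝ → ℝ := fun x => (h a).arg + ∫ t in a..x, u t
  have hθd : ∀ x ∈ Set.Icc a b, HasDerivWithinAt θ (u x) (Set.Icc a b) x := by
    intro x hx
    have : Fact (x ∈ Set.Icc a b) := ⟨hx⟩
    refine HasDerivWithinAt.const_add _ ?_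
    refine intervalIntegral.integral_hasDerivWithinAt_right ?_ (t := Set.Icc a b) ?_ (huc x hx)
    · apply ContinuousOn.intervalIntegrable
      rw [Set.uIcc_of_le hx.1]
      exact huc.mono (Set.Icc_subset_Icc_right hx.2)
    · exact huc.stronglyMeasurableAtFilter_nhdsWithin measurableSet_Icc x
  have hθc : ContinuousOn θ (Set.Icc a b) := fun x hx => (hθd x hx).continuousWithinAt
  have hexp : ∀ x ∈ Set.Icc a b, h x = Complex.exp (θ x * Complex.I) := by
    let G : ℝ → ℂ := fun x => h x * Complex.exp (-(θ x * Complex.I))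
    have hG : ∀ x ∈ Set.Icc a b, HasDerivWithinAt G 0 (Set.Icc a b) x := by
      intro x hx
      have hθ' := (((hθd x hx).ofReal_comp.mul_const Complex.I).neg).cexp
      refine ((hd x hx).mul hθ').congr_deriv ?_
      rw [hu x hx]; ring
    have hGc : ∀ x ∈ Set.Icc a b, G x = G a := by
      apply constant_of_derivWithin_zero (fun x hx => (hG x hx).differentiableWithinAt)
      intro x hx
      exact (hG x (Set.Ico_subset_Icc_self hx)).derivWithin (uniqueDiffOn_Icc hab x (Set.Ico_subset_Icc_self hx))
    have hGa : G a = 1 := by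
      have e1 : θ a = (h a).arg := by simp [θ]
      have e2 := Complex.norm_mul_exp_arg_mul_I (h a)
      rw [h1 a (Set.left_mem_Icc.mpr hab.le), Complex.ofReal_one, one_mul] at e2
      simp only [G]
      rw [e1, Complex.exp_neg, e2]
      exact mul_inv_cancel₀ (hh0 a (Set.left_mem_Icc.mpr hab.le))
    intro x hx
    have := hGc x hx
    rw [hGa] at this
    simp only [G] at this
    rw [Complex.exp_neg, mul_inv_eq_one₀ (Complex.exp_ne_zero _)] at this
    exact this
  have hosc : ∀ x ∈ Set.Icc a b, ∀ y ∈ Set.Icc a b, |θ x - θ y| ≤ Real.pi := by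
    have hii : ∀ x ∈ Set.Icc a b, IntervalIntegrable u volume a x := by
      intro x hx
      apply ContinuousOn.intervalIntegrable
      rw [Set.uIcc_of_le hx.1]
      exact huc.mono (Set.Icc_subset_Icc_right hx.2)
    have key : ∀ x ∈ Set.Icc a b, ∀ y ∈ Set.Icc a b, y ≤ x → |θ x - θ y| ≤ Real.pi := by
      intro x hx y hy hyx
      have e1 : θ x - θ y = ∫ t in y..x, u t := by
        simp only [θ]
        rw [← intervalIntegral.integral_interval_sub_left (hii x hx) (hii y hy)]; ring
      have e2 : ∫ t in a..b, |u t| = ∫ t in a..b, ‖h' t‖ := by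
        apply intervalIntegral.integral_congr
        intro t ht
        rw [Set.uIcc_of_le hab.le] at ht
        exact hun t ht
      have e3 : IntervalIntegrable (fun t => |u t|) volume a b := (hii b (Set.right_mem_Icc.mpr hab.le)).abs
      calc |θ x - θ y| ≤ ∫ t in y..x, |u t| := by
            rw [e1]; exact intervalIntegral.abs_integral_le_integral_abs hyx
        _ ≤ ∫ t in a..b, |u t| := intervalIntegral.integral_mono_interval hy.1 hyx hx.2
            (Filter.Eventually.of_forall fun t => abs_nonneg _) e3
        _ ≤ Real.pi := by rw [e2]; exact hle
    intro x hx y hy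
    rcases le_total y x with h | h
    · exact key x hx y hy h
    · rw [abs_sub_comm]; exact key y hy x hx h
  obtain ⟨xM, hxM, hM⟩ := isCompact_Icc.exists_isMaxOn (Set.nonempty_Icc.mpr hab.le) hθc
  obtain ⟨xm, hxm, hm⟩ := isCompact_Icc.exists_isMinOn (Set.nonempty_Icc.mpr hab.le) hθc
  let c := (θ xM + θ xm) / 2
  have hcos : ∀ x ∈ Set.Icc a b, 0 ≤ Real.cos (θ x - c) := by
    intro x hx
    have h1 : θ x ≤ θ xM := hM hx
    have h2 : θ xm ≤ θ x := hm hx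
    have h3 := (abs_le.mp (hosc xM hxM xm hxm)).2
    apply Real.cos_nonneg_of_neg_pi_div_two_le_of_le <;> simp only [c] <;> linarith
  have hint : ∫ x in a..b, Real.cos (θ x - c) = 0 := by
    have e1 : ∀ x ∈ Set.uIcc a b, Real.cos (θ x - c) = (h x * Complex.exp (-(c * Complex.I))).re := by
      intro x hx
      rw [Set.uIcc_of_le hab.le] at hx
      rw [hexp x hx, ← Complex.exp_add, ← Complex.exp_ofReal_mul_I_re]
      congr 2
      push_cast; ring
    rw [intervalIntegral.integral_congr e1]
    have hi : IntervalIntegrable (fun x => h x * Complex.exp (-(c * Complex.I))) volume a b := by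
      apply ContinuousOn.intervalIntegrable
      rw [Set.uIcc_of_le hab.le]
      exact hhc.mul continuousOn_const
    have e2 := Complex.reCLM.intervalIntegral_comp_comm hi
    simp only [Complex.reCLM_apply] at e2
    rw [e2, intervalIntegral.integral_mul_const, h0]
    simp
  obtain ⟨x₀, hx₀, hxc⟩ : ∃ x ∈ Set.Icc a b, θ x = c := by
    have := isPreconnected_Icc.intermediate_value hxm hxM hθc
    have hc' : c ∈ Set.Icc (θ xm) (θ xM) := by
      have : θ xm ≤ θ xM := hm hxM
      constructor <;> simp only [c] <;> linarith
    obtain ⟨x, hx, h⟩ := this hc'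
    exact ⟨x, hx, h⟩
  have hpos : 0 < ∫ x in a..b, Real.cos (θ x - c) := by
    apply intervalIntegral.integral_pos hab
    · exact Real.continuous_cos.comp_continuousOn (hθc.sub continuousOn_const)
    · intro x hx; exact hcos x (Set.Ioc_subset_Icc_self hx)
    · exact ⟨x₀, hx₀, by rw [hxc]; simp⟩
  linarith

theorem MemYn_nonzero (n : ℕ) (hn : 1 ≤ n) (h : ℝ → ℂ) (hh : MemYn n h) :
    ∃ j : Fin n, ∫ s in ((j : ℕ) / n : ℝ)..(((j : ℕ) + 1 : ℕ) / n : ℝ), h s ≠ 0 := by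
  by_contra! hcon
  obtain ⟨hs, h1, hb⟩ := hh
  have hn0 : (0 : ℝ) < n := by exact_mod_cast hn
  have e1 : ∫ x in (0:ℝ)..1, ‖h x‖ = 1 := by
    rw [intervalIntegral.integral_congr (g := fun _ => (1 : ℝ))]
    · simp
    · intro x hx
      rw [Set.uIcc_of_le zero_le_one] at hx
      exact h1 x hx
  let h' := derivWithin h (Set.Icc (0:ℝ) 1)
  have hc : ContinuousOn h' (Set.Icc 0 1) :=
    hs.continuousOn_derivWithin (uniqueDiffOn_Icc zero_lt_one) (by simp)
  have hd : ∀ x ∈ Set.Icc (0:ℝ) 1, HasDerivWithinAt h (h' x) (Set.Icc 0 1) x := fun x hx =>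
    ((hs.differentiableOn (by simp)) x hx).hasDerivWithinAt
  let a : ℕ → ℝ := fun k => (k : ℝ) / n
  have ha : ∀ k, a k < a (k + 1) := by
    intro k
    simp only [a]
    push_cast
    gcongr
    linarith
  have hsub : ∀ k < n, Set.Icc (a k) (a (k + 1)) ⊆ Set.Icc 0 1 := by
    intro k hk
    apply Set.Icc_subset_Icc
    · simp only [a]; positivity
    · simp only [a]
      rw [div_le_one hn0]
      exact_mod_cast hk
  have harc : ∀ k < n, Real.pi < ∫ x in (a k)..(a (k + 1)), ‖h' x‖ := by
    intro k hk
    refine arc_lemma h h' _ _ (ha k) (fun x hx => (hd x (hsub k hk hx)).mono (hsub k hk))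
      (hc.mono (hsub k hk)) (fun x hx => h1 x (hsub k hk hx)) (hcon ⟨k, hk⟩)
  have hsum := intervalIntegral.sum_integral_adjacent_intervals (f := fun x => ‖h' x‖) (a := a) (n := n)
    (μ := volume) (fun k hk => by
      apply ContinuousOn.intervalIntegrable
      rw [Set.uIcc_of_le (ha k).le]
      exact (hc.mono (hsub k hk)).norm)
  have e2 : a 0 = 0 := by simp [a]
  have e3 : a n = 1 := by simp only [a]; exact div_self hn0.ne'
  rw [e2, e3] at hsum
  have hlt : ∑ k ∈ Finset.range n, Real.pi < ∑ k ∈ Finset.range n, ∫ x in (a k)..(a (k + 1)), ‖h' x‖ :=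
    Finset.sum_lt_sum_of_nonempty (by simp; omega) fun k hk => harc k (Finset.mem_range.mp hk)
  rw [hsum, Finset.sum_const, Finset.card_range, nsmul_eq_mul] at hlt
  rw [e1] at hb
  have : (∫ x in (0:ℝ)..1, ‖h' x‖) ≤ Real.pi * n := by linarith
  linarith [mul_comm Real.pi (n : ℝ)]

/-- **Upper bound for the coindex.** For `n ≥ 1` there is no map `β : S^{2n} → Y_n`,
continuous for the `L¹`-topology on `Y_n`, with `β(-x) = -β(x)` pointwise;
hence `coind Y_n ≤ 2n - 1`. -/
theorem coindex_Yn_le (n : ℕ) (hn : 1 ≤ n) :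
    ¬ ∃ β : EuclideanSpace ℝ (Fin (2 * n + 1)) → (ℝ → ℂ),
      (∀ x ∈ Metric.sphere (0 : EuclideanSpace ℝ (Fin (2 * n + 1))) 1, MemYn n (β x)) ∧
      (∀ x ∈ Metric.sphere (0 : EuclideanSpace ℝ (Fin (2 * n + 1))) 1,
        β (-x) = fun s => -(β x s)) ∧
      (∀ x ∈ Metric.sphere (0 : EuclideanSpace ℝ (Fin (2 * n + 1))) 1, ∀ ε > (0:ℝ),
        ∃ δ > (0:ℝ), ∀ x' ∈ Metric.sphere (0 : EuclideanSpace ℝ (Fin (2 * n + 1))) 1,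
          ‖x' - x‖ < δ → (∫ s in (0:ℝ)..1, ‖β x' s - β x s‖) < ε) := by
  rintro ⟨β, hY, hodd, hcont⟩
  have hn0 : (0 : ℝ) < n := by exact_mod_cast hn
  let J : EuclideanSpace ℝ (Fin (2 * n + 1)) → Fin n → ℂ := fun x j =>
    ∫ s in ((j : ℕ) / n : ℝ)..(((j : ℕ) + 1 : ℕ) / n : ℝ), β x s
  have hJodd : ∀ x ∈ Metric.sphere (0 : EuclideanSpace ℝ (Fin (2 * n + 1))) 1, ∀ j, J (-x) j = - J x j := by
    intro x hx j
    simp only [J]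
    rw [hodd x hx, intervalIntegral.integral_neg]
  have hJc : ∀ j, ContinuousOn (fun x => J x j) (Metric.sphere (0 : EuclideanSpace ℝ (Fin (2 * n + 1))) 1) := by
    intro j
    rw [Metric.continuousOn_iff]
    intro x hx ε hε
    obtain ⟨δ, hδ, H⟩ := hcont x hx ε hε
    refine ⟨δ, hδ, fun x' hx' hd => ?_⟩
    have hlt := H x' hx' (by rwa [← dist_eq_norm])
    have h0 : (0 : ℝ) ≤ (j : ℕ) / n := by positivity
    have h1 : (((j : ℕ) + 1 : ℕ) / n : ℝ) ≤ 1 := by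
      rw [div_le_one hn0]
      exact_mod_cast j.2
    have hle : ((j : ℕ) / n : ℝ) ≤ (((j : ℕ) + 1 : ℕ) / n : ℝ) := by
      push_cast; gcongr; linarith
    have hco : ∀ y ∈ Metric.sphere (0 : EuclideanSpace ℝ (Fin (2 * n + 1))) 1,
        ContinuousOn (β y) (Set.Icc 0 1) := fun y hy => (hY y hy).1.continuousOn
    have hii : ∀ y ∈ Metric.sphere (0 : EuclideanSpace ℝ (Fin (2 * n + 1))) 1,
        IntervalIntegrable (β y) volume ((j : ℕ) / n : ℝ) (((j : ℕ) + 1 : ℕ) / n : ℝ) := by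
      intro y hy
      apply ContinuousOn.intervalIntegrable
      rw [Set.uIcc_of_le hle]
      exact (hco y hy).mono (Set.Icc_subset_Icc h0 h1)
    have hin : IntervalIntegrable (fun s => ‖β x' s - β x s‖) volume 0 1 := by
      apply ContinuousOn.intervalIntegrable
      rw [Set.uIcc_of_le zero_le_one]
      exact ((hco x' hx').sub (hco x hx)).norm
    rw [dist_eq_norm]
    simp only [J]
    rw [← intervalIntegral.integral_sub (hii x' hx') (hii x hx)]
    refine lt_of_le_of_lt (intervalIntegral.norm_integral_le_integral_norm hle) (lt_of_le_of_lt ?_ hlt)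
    exact intervalIntegral.integral_mono_interval h0 hle h1
      (Filter.Eventually.of_forall fun t => norm_nonneg _) hin
  let e : Fin (2 * n) ≃ Fin 2 × Fin n := finProdFinEquiv.symm
  let f : EuclideanSpace ℝ (Fin (2 * n + 1)) → Fin (2 * n) → ℝ := fun x k =>
    if (e k).1 = 0 then (J x (e k).2).re else (J x (e k).2).im
  obtain ⟨x, hx, hfx⟩ := borsuk_ulam (2 * n) f
    (by
      rw [continuousOn_pi]
      intro k
      simp only [f]
      split_ifs
      · exact Complex.continuous_re.comp_continuousOn (hJc _)
      · exact Complex.continuous_im.comp_continuousOn (hJc _))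
    (by
      intro x hx
      ext k
      simp only [f, Pi.neg_apply]
      rw [hJodd x hx]
      split_ifs <;> simp)
  obtain ⟨j, hj⟩ := MemYn_nonzero n hn (β x) (hY x hx)
  apply hj
  have hre := congrFun hfx (e.symm (0, j))
  have him := congrFun hfx (e.symm (1, j))
  simp only [f, Equiv.apply_symm_apply] at hre him
  change J x j = 0
  exact Complex.ext (by simpa using hre) (by simpa using him)
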